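/- Let u, α, β : [0,∞) → ℝ be regulated functions with α ≤ β pointwise, assume TV^{α,β}(u,[0,t]) < ∞ for every t ≥ 0, and let ξ⁰ ∈ [u(0) − β(0), u(0) − α(0)]. Define α⁰, β⁰, u^{ξ⁰} : [0,∞) → ℝ by α⁰(0) = β⁰(0) = 0, u^{ξ⁰}(0) = ξ⁰, and α⁰(t) = α(t), β⁰(t) = β(t), u^{ξ⁰}(t) = u(t) for t > 0. Then: (i) TV^{α⁰,β⁰}(u^{ξ⁰},[0,t]) < ∞ for all t ≥ 0; (ii) the function ξ(t) := ξ⁰ + UTV^{α⁰,β⁰}(u^{ξ⁰},[0,t]) − DTV^{α⁰,β⁰}(u^{ξ⁰},[0,t]) satisfies ξ(0) = ξ⁰, α(t) ≤ u(t) − ξ(t) ≤ β(t) for all t ≥ 0, UTV(ξ,[0,t]) = UTV^{α⁰,β⁰}(u^{ξ⁰},[0,t]) and DTV(ξ,[0,t]) = DTV^{α⁰,β⁰}(u^{ξ⁰},[0,t]) for all t > 0, and for every χ : [0,∞) → ℝ with χ(0) = ξ⁰ and α ≤ u − χ ≤ β pointwise one has TV(ξ,[0,t]) ≤ TV(χ,[0,t])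 for all t > 0. -/

import Mathlib

open Filter Set Topology
open scoped ENNReal

/-- Sum of `f` over consecutive pairs of a finite sequence of points. -/
noncomputable def genVar (f : ℝ → ℝ → ℝ) (a b : ℝ) : ℝ≥0∞ :=
  ⨆ (n : ℕ) (t : ℕ → ℝ)
    (_ : (∀ i, i < n → t i < t (i + 1)) ∧ a ≤ t 0 ∧ t n ≤ b),
    ENNReal.ofReal (∑ i ∈ Finset.range n, f (t i) (t (i + 1)))

noncomputable def TV (ψ : ℝ → ℝ) : ℝ → ℝ → ℝ≥0∞ :=
  genVar (fun s t => |ψ t - ψ s|)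

noncomputable def UTV (ψ : ℝ → ℝ) : ℝ → ℝ → ℝ≥0∞ :=
  genVar (fun s t => max (ψ t - ψ s) 0)

noncomputable def DTV (ψ : ℝ → ℝ) : ℝ → ℝ → ℝ≥0∞ :=
  genVar (fun s t => max (ψ s - ψ t) 0)

noncomputable def TVc (ψ : ℝ → ℝ) (c : ℝ) : ℝ → ℝ → ℝ≥0∞ :=
  genVar (fun s t => max (|ψ t - ψ s| - c) 0)

noncomputable def UTVc (ψ : ℝ → ℝ) (c : ℝ) : ℝ → ℝ → ℝ≥0∞ :=
  genVar (fun s t => max (ψ t - ψ s - c) 0)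

noncomputable def DTVc (ψ : ℝ → ℝ) (c : ℝ) : ℝ → ℝ → ℝ≥0∞ :=
  genVar (fun s t => max (ψ s - ψ t - c) 0)

noncomputable def TVab (ψ α β : ℝ → ℝ) : ℝ → ℝ → ℝ≥0∞ :=
  genVar (fun s t =>
    max (|(ψ t - (α t + β t) / 2) - (ψ s - (α s + β s) / 2)|
          - ((β t - α t) + (β s - α s)) / 2) 0)

noncomputable def UTVab (ψ α β : ℝ → ℝ) : ℝ → ℝ → ℝ≥0∞ :=
  genVar (fun s t =>
    max ((ψ t - (α t + β t) / 2) - (ψ s - (α s + β s) / 2)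
          - ((β t - α t) + (β s - α s)) / 2) 0)

noncomputable def DTVab (ψ α β : ℝ → ℝ) : ℝ → ℝ → ℝ≥0∞ :=
  genVar (fun s t =>
    max ((ψ s - (α s + β s) / 2) - (ψ t - (α t + β t) / 2)
          - ((β t - α t) + (β s - α s)) / 2) 0)

/-- Regulated on `[a,∞)`: right limits everywhere, left limits at points `> a`. -/
def Regulated (a : ℝ) (ψ : ℝ → ℝ) : Prop :=
  (∀ x, a ≤ x → ∃ L, Tendsto ψ (𝓝[>] x) (𝓝 L)) ∧
  (∀ x, a < x → ∃ L, Tendsto ψ (𝓝[<] x) (𝓝 L))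

/-- Regulated on `[a,b]`. -/
def RegulatedOn (a b : ℝ) (ψ : ℝ → ℝ) : Prop :=
  (∀ x, a ≤ x → x < b → ∃ L, Tendsto ψ (𝓝[>] x) (𝓝 L)) ∧
  (∀ x, a < x → x ≤ b → ∃ L, Tendsto ψ (𝓝[<] x) (𝓝 L))

/-!
Write `l = u₀ - β₀` and `h = u₀ - α₀`. The constraint `α ≤ u - χ ≤ β` together with the initial
condition says that `χ` stays between `l` and `h`, and modifying the data at the initial time pinches
this band to the single value `ξ₀` there. Every rise of a function in the band from time `s` to time
`t` is at least `l t - h s`, so its upward variation dominates the sums of `(l t - h s)₊`, which form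
`UTVab`; changing signs, its downward variation dominates `DTVab`. Conversely, an induction along a
partition shows that `ξ = ξ₀ + UTVab - DTVab` itself lies in the band. Being built from a difference
of two monotone functions, `ξ` has at most these variations, so both bounds are attained, and the
Jordan decomposition of the total variation gives minimality.
-/

/-- Strictly increasing points `p 0 < ⋯ < p n` of `[a, b]`, the index set of the supremum in
`genVar`. The values of `p` beyond `n` are irrelevant. -/
def IsPartition (a b : ℝ) (n : ℕ) (p : ℕ → ℝ) : Prop :=
  (∀ i, i < n → p i < p (i + 1)) ∧ a ≤ p 0 ∧ p n ≤ b

namespace IsPartition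

variable {a b c : ℝ} {n : ℕ} {p : ℕ → ℝ}

theorem strictMonoOn (hp : IsPartition a b n p) : StrictMonoOn p (Iic n) :=
  strictMonoOn_Iic_of_lt_succ hp.1

theorem mem_Icc (hp : IsPartition a b n p) {i : ℕ} (hi : i ≤ n) : p i ∈ Icc a b :=
  ⟨hp.2.1.trans (hp.strictMonoOn.monotoneOn (Nat.zero_le n) hi (Nat.zero_le i)),
    (hp.strictMonoOn.monotoneOn hi self_mem_Iic hi).trans hp.2.2⟩

theorem mono_right (hp : IsPartition a b n p) (hbc : b ≤ c) : IsPartition a c n p :=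
  ⟨hp.1, hp.2.1, hp.2.2.trans hbc⟩

theorem of_succ (hp : IsPartition a b (n + 1) p) : IsPartition a (p n) n p :=
  ⟨fun i hi => hp.1 i (hi.trans n.lt_succ_self), hp.2.1, le_rfl⟩

theorem update_succ (hp : IsPartition a b n p) (hc : p n < c) :
    IsPartition a c (n + 1) (Function.update p (n + 1) c) := by
  refine ⟨fun i hi => ?_, by simpa using hp.2.1, by simp⟩
  rw [Function.update_of_ne hi.ne]
  rcases (Nat.lt_succ_iff.1 hi).eq_or_lt with rfl | hin
  · simpa using hc
  · rw [Function.update_of_ne (by lia)]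
    exact hp.1 i hin

end IsPartition

section GenVar

variable {f g : ℝ → ℝ → ℝ} {a b s t : ℝ} {n : ℕ} {p : ℕ → ℝ}

theorem sum_range_update_succ (f : ℝ → ℝ → ℝ) (n : ℕ) (p : ℕ → ℝ) (c : ℝ) :
    ∑ i ∈ Finset.range (n + 1),
        f (Function.update p (n + 1) c i) (Function.update p (n + 1) c (i + 1)) =
      ∑ i ∈ Finset.range n, f (p i) (p (i + 1)) + f (p n) c := by
  rw [Finset.sum_range_succ, Function.update_self, Function.update_of_ne n.lt_succ_self.ne]
  congr 1
  refine Finset.sum_congr rfl fun i hi => ?_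
  have hin := Finset.mem_range.1 hi
  rw [Function.update_of_ne (by lia), Function.update_of_ne (by lia)]

theorem genVar_le_iff {C : ℝ≥0∞} :
    genVar f a b ≤ C ↔ ∀ n p, IsPartition a b n p →
      ENNReal.ofReal (∑ i ∈ Finset.range n, f (p i) (p (i + 1))) ≤ C := by
  simp only [genVar, iSup_le_iff, IsPartition]

theorem IsPartition.ofReal_sum_le_genVar (hp : IsPartition a b n p) :
    ENNReal.ofReal (∑ i ∈ Finset.range n, f (p i) (p (i + 1))) ≤ genVar f a b :=
  genVar_le_iff.1 le_rfl n p hp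

theorem genVar_self (f : ℝ → ℝ → ℝ) (a : ℝ) : genVar f a a = 0 := by
  refine nonpos_iff_eq_zero.1 (genVar_le_iff.2 fun n p hp => ?_)
  obtain rfl : n = 0 := by
    by_contra hn
    have := hp.strictMonoOn (Nat.zero_le n) self_mem_Iic (Nat.pos_of_ne_zero hn)
    linarith [hp.2.1, hp.2.2]
  simp

theorem genVar_mono_right (hst : s ≤ t) : genVar f a s ≤ genVar f a t :=
  genVar_le_iff.2 fun _ _ hp => (hp.mono_right hst).ofReal_sum_le_genVar

theorem genVar_mono (hfg : ∀ s ∈ Icc a b, ∀ t ∈ Icc a b, f s t ≤ g s t) :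
    genVar f a b ≤ genVar g a b := by
  refine genVar_le_iff.2 fun n p hp => le_trans ?_ hp.ofReal_sum_le_genVar
  refine ENNReal.ofReal_le_ofReal (Finset.sum_le_sum fun i hi => ?_)
  have hin := Finset.mem_range.1 hi
  exact hfg _ (hp.mem_Icc hin.le) _ (hp.mem_Icc hin)

theorem genVar_add_le (f g : ℝ → ℝ → ℝ) (a b : ℝ) :
    genVar (f + g) a b ≤ genVar f a b + genVar g a b := by
  refine genVar_le_iff.2 fun n p hp => ?_
  simp only [Pi.add_apply, Finset.sum_add_distrib]
  exact ENNReal.ofReal_add_le.trans (add_le_add hp.ofReal_sum_le_genVar hp.ofReal_sum_le_genVar)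

-- Only the first increment of a partition can start at `a`, so `C` is paid at most once.
theorem genVar_le_genVar_add_ofReal {C : ℝ} (hC : 0 ≤ C)
    (hleft : ∀ t, a < t → f a t ≤ g a t + C) (h : ∀ s t, a < s → s < t → f s t ≤ g s t) :
    genVar f a b ≤ genVar g a b + ENNReal.ofReal C := by
  refine genVar_le_iff.2 fun n p hp => ?_
  have hterm : ∀ i ∈ Finset.range n,
      f (p i) (p (i + 1)) ≤ g (p i) (p (i + 1)) + if i = 0 then C else 0 := by
    intro i hi
    have hin := Finset.mem_range.1 hi
    rcases (hp.mem_Icc hin.le).1.eq_or_lt with hai | hai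
    · have hi0 : i = 0 := by
        by_contra hne
        have := hp.strictMonoOn (Nat.zero_le n) hin.le (Nat.pos_of_ne_zero hne)
        linarith [hp.2.1]
      rw [if_pos hi0, ← hai]
      exact hleft _ (hai.trans_lt (hp.1 i hin))
    · have := h _ _ hai (hp.1 i hin)
      split_ifs <;> linarith
  have hsum : ∑ i ∈ Finset.range n, f (p i) (p (i + 1)) ≤
      ∑ i ∈ Finset.range n, g (p i) (p (i + 1)) + C := by
    refine (Finset.sum_le_sum hterm).trans ?_
    rw [Finset.sum_add_distrib, Finset.sum_ite_eq']
    split_ifs <;> linarith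
  exact (ENNReal.ofReal_le_ofReal hsum).trans
    (ENNReal.ofReal_add_le.trans (add_le_add_left hp.ofReal_sum_le_genVar _))

theorem genVar_le_ofReal_sub {F : ℝ → ℝ} (hf : ∀ s t, 0 ≤ f s t)
    (h : ∀ s t, a ≤ s → s < t → t ≤ b → f s t ≤ F t - F s) :
    genVar f a b ≤ ENNReal.ofReal (F b - F a) := by
  refine genVar_le_iff.2 fun n p hp => ENNReal.ofReal_le_ofReal ?_
  have hmono : MonotoneOn F (Icc a b) := by
    intro s hs t ht hst
    rcases hst.eq_or_lt with rfl | hlt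
    · exact le_rfl
    · linarith [hf s t, h s t hs.1 hlt ht.2]
  have hab : a ≤ b := (hp.mem_Icc le_rfl).1.trans hp.2.2
  calc ∑ i ∈ Finset.range n, f (p i) (p (i + 1))
      ≤ ∑ i ∈ Finset.range n, (F (p (i + 1)) - F (p i)) :=
        Finset.sum_le_sum fun i hi =>
          have hin := Finset.mem_range.1 hi
          h _ _ (hp.mem_Icc hin.le).1 (hp.1 i hin) (hp.mem_Icc hin).2
    _ = F (p n) - F (p 0) := Finset.sum_range_sub (fun i => F (p i)) n
    _ ≤ F b - F a :=
        sub_le_sub (hmono (hp.mem_Icc le_rfl) (right_mem_Icc.2 hab) hp.2.2)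
          (hmono (left_mem_Icc.2 hab) (hp.mem_Icc n.zero_le) hp.2.1)

theorem IsPartition.exists_last_eq (hf : ∀ s t, 0 ≤ f s t) (hp : IsPartition a b n p) :
    ∃ m q, IsPartition a b m q ∧ q m = b ∧
      ∑ i ∈ Finset.range n, f (p i) (p (i + 1)) ≤ ∑ i ∈ Finset.range m, f (q i) (q (i + 1)) := by
  rcases hp.2.2.eq_or_lt with hpb | hpb
  · exact ⟨n, p, hp, hpb, le_rfl⟩
  · refine ⟨n + 1, Function.update p (n + 1) b, hp.update_succ hpb, by simp, ?_⟩
    rw [sum_range_update_succ]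
    exact le_add_of_nonneg_right (hf _ _)

theorem IsPartition.ofReal_sum_add_le_genVar (hf : ∀ s t, 0 ≤ f s t) (hst : s < t)
    (hp : IsPartition a s n p) :
    ENNReal.ofReal (∑ i ∈ Finset.range n, f (p i) (p (i + 1)) + f s t) ≤ genVar f a t := by
  obtain ⟨m, q, hq, rfl, hpq⟩ := hp.exists_last_eq hf
  calc ENNReal.ofReal (∑ i ∈ Finset.range n, f (p i) (p (i + 1)) + f (q m) t)
      ≤ ENNReal.ofReal (∑ i ∈ Finset.range m, f (q i) (q (i + 1)) + f (q m) t) := by gcongr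
    _ ≤ genVar f a t := by
        rw [← sum_range_update_succ]
        exact (hq.update_succ hst).ofReal_sum_le_genVar

theorem genVar_add_ofReal_le (hf : ∀ s t, 0 ≤ f s t) (has : a ≤ s) (hst : s < t) :
    genVar f a s + ENNReal.ofReal (f s t) ≤ genVar f a t := by
  have hsingle : ENNReal.ofReal (f s t) ≤ genVar f a t := by
    have hp : IsPartition a s 0 fun _ => s := ⟨by simp, has, le_rfl⟩
    simpa using hp.ofReal_sum_add_le_genVar hf hst
  refine add_le_of_le_tsub_right_of_le hsingle (genVar_le_iff.2 fun n p hp => ?_)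
  refine ENNReal.le_sub_of_add_le_right ENNReal.ofReal_ne_top ?_
  rw [← ENNReal.ofReal_add (Finset.sum_nonneg fun _ _ => hf _ _) (hf s t)]
  exact hp.ofReal_sum_add_le_genVar hf hst

theorem le_toReal_genVar_sub (hf : ∀ s t, 0 ≤ f s t) (has : a ≤ s) (hst : s < t)
    (hfin : genVar f a t ≠ ⊤) :
    f s t ≤ (genVar f a t).toReal - (genVar f a s).toReal := by
  have hfin' : genVar f a s ≠ ⊤ := ne_top_of_le_ne_top hfin (genVar_mono_right hst.le)
  have := ENNReal.toReal_mono hfin (genVar_add_ofReal_le hf has hst)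
  rw [ENNReal.toReal_add hfin' ENNReal.ofReal_ne_top, ENNReal.toReal_ofReal (hf s t)] at this
  linarith

end GenVar

section Jordan

variable {χ : ℝ → ℝ} {a b s t : ℝ}

theorem DTV_eq_UTV_neg (χ : ℝ → ℝ) : DTV χ = UTV (-χ) := by
  simp only [DTV, UTV, Pi.neg_apply, neg_sub_neg]

theorem TV_self (χ : ℝ → ℝ) (a : ℝ) : TV χ a a = 0 :=
  genVar_self _ a

theorem TV_neg (χ : ℝ → ℝ) : TV (-χ) = TV χ := by
  simp only [TV, Pi.neg_apply, neg_sub_neg, abs_sub_comm]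

theorem TV_le_UTV_add_DTV (χ : ℝ → ℝ) (a b : ℝ) : TV χ a b ≤ UTV χ a b + DTV χ a b := by
  refine le_trans (genVar_mono fun s _ t _ => ?_) (genVar_add_le _ _ a b)
  rw [← posPart_add_negPart (χ t - χ s), negPart_def, neg_sub]
  exact le_rfl

theorem abs_sub_le_toReal_TV_sub (has : a ≤ s) (hst : s ≤ t) (hfin : TV χ a t ≠ ⊤) :
    |χ t - χ s| ≤ (TV χ a t).toReal - (TV χ a s).toReal := by
  rcases hst.eq_or_lt with rfl | hlt
  · simp
  · exact le_toReal_genVar_sub (f := fun s t => |χ t - χ s|) (fun _ _ => abs_nonneg _) has hlt hfin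

theorem UTV_le_ofReal (hfin : TV χ a b ≠ ⊤) :
    UTV χ a b ≤ ENNReal.ofReal (((TV χ a b).toReal + (χ b - χ a)) / 2) := by
  have hU : UTV χ a b ≤ ENNReal.ofReal
      (((TV χ a b).toReal + χ b) / 2 - ((TV χ a a).toReal + χ a) / 2) := by
    refine genVar_le_ofReal_sub (F := fun t => ((TV χ a t).toReal + χ t) / 2)
      (fun _ _ => le_max_right _ _) fun s t has hst htb => ?_
    have hincr := abs_le.1 (abs_sub_le_toReal_TV_sub has hst.le
      (ne_top_of_le_ne_top hfin (genVar_mono_right htb)))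
    exact max_le (by linarith) (by linarith)
  refine hU.trans_eq (congrArg ENNReal.ofReal ?_)
  rw [TV_self, ENNReal.toReal_zero]
  ring

theorem UTV_add_DTV_le_TV (hab : a ≤ b) : UTV χ a b + DTV χ a b ≤ TV χ a b := by
  by_cases hfin : TV χ a b = ⊤
  · exact hfin ▸ le_top
  have hD := UTV_le_ofReal (χ := -χ) (by rwa [TV_neg])
  rw [← DTV_eq_UTV_neg, TV_neg, Pi.neg_apply, Pi.neg_apply] at hD
  have hnet := abs_le.1 (abs_sub_le_toReal_TV_sub le_rfl hab hfin)
  rw [TV_self, ENNReal.toReal_zero, sub_zero] at hnet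
  refine (add_le_add (UTV_le_ofReal hfin) hD).trans ?_
  rw [← ENNReal.ofReal_add (by linarith) (by linarith)]
  exact ENNReal.ofReal_le_of_le_toReal (by linarith)

end Jordan

/-- The least upward variation forced on a function staying between `l` and `h`. The least downward
variation is `bandUTV (-h) (-l)`, so that no second definition is needed. -/
noncomputable def bandUTV (l h : ℝ → ℝ) : ℝ → ℝ → ℝ≥0∞ :=
  genVar fun s t => max (l t - h s) 0

/-- The play operator in Jordan-like form: the function with value `c` at time `a` whose upward and
downward variations are those forced by the band between `l` and `h`. Meaningful only where both are
finite, since `ENNReal.toReal` sends `⊤` to `0`. -/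
noncomputable def bandPlay (c : ℝ) (l h : ℝ → ℝ) (a t : ℝ) : ℝ :=
  c + (bandUTV l h a t).toReal - (bandUTV (-h) (-l) a t).toReal

section Band

variable {l h χ : ℝ → ℝ} {a b c s t : ℝ}

theorem bandUTV_le_UTV (hχ : ∀ t ∈ Icc a b, l t ≤ χ t ∧ χ t ≤ h t) :
    bandUTV l h a b ≤ UTV χ a b :=
  genVar_mono fun s hs t ht => max_le_max (sub_le_sub (hχ t ht).1 (hχ s hs).2) le_rfl

theorem bandUTV_neg_le_DTV (hχ : ∀ t ∈ Icc a b, l t ≤ χ t ∧ χ t ≤ h t) :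
    bandUTV (-h) (-l) a b ≤ DTV χ a b := by
  rw [DTV_eq_UTV_neg]
  exact bandUTV_le_UTV fun t ht => ⟨neg_le_neg (hχ t ht).2, neg_le_neg (hχ t ht).1⟩

theorem max_sub_le_toReal_bandUTV_sub (hlh : l s ≤ h s) (has : a ≤ s) (hst : s ≤ t)
    (hfin : bandUTV l h a t ≠ ⊤) :
    max (l t - h s) 0 ≤ (bandUTV l h a t).toReal - (bandUTV l h a s).toReal := by
  rcases hst.eq_or_lt with rfl | hlt
  · simpa using hlh
  · exact le_toReal_genVar_sub (f := fun s t => max (l t - h s) 0)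
      (fun _ _ => le_max_right _ _) has hlt hfin

/- If the last step contributes a fall `l (p n) - h (p (n + 1))`, the induction hypothesis at time
`p n` absorbs the term `l (p n)`, and the rise forced on `[p (n + 1), t]` absorbs the remaining
`l t - h (p (n + 1))`. -/
theorem IsPartition.sum_max_add_le {n : ℕ} {p : ℕ → ℝ} (hp : IsPartition a t n p)
    (hlh : ∀ s, a ≤ s → l s ≤ h s) (hfin : bandUTV l h a t ≠ ⊤) :
    ∑ i ∈ Finset.range n, max (l (p i) - h (p (i + 1))) 0 + l t ≤
      h a + (bandUTV l h a t).toReal := by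
  induction n generalizing t with
  | zero =>
    have hrise := (le_max_left _ _).trans
      (max_sub_le_toReal_bandUTV_sub (hlh a le_rfl) le_rfl (hp.2.1.trans hp.2.2) hfin)
    simp only [Finset.range_zero, Finset.sum_empty, zero_add]
    linarith [ENNReal.toReal_nonneg (a := bandUTV l h a a)]
  | succ n ih =>
    have hn := hp.mem_Icc n.le_succ
    have hn' := hp.mem_Icc le_rfl
    rw [Finset.sum_range_succ]
    rcases le_total (l (p n) - h (p (n + 1))) 0 with hle | hge
    · rw [max_eq_right hle, add_zero]
      exact ih (hp.of_succ.mono_right hn.2) hfin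
    · rw [max_eq_left hge]
      have hpast := ih hp.of_succ (ne_top_of_le_ne_top hfin (genVar_mono_right hn.2))
      have hmono : (bandUTV l h a (p n)).toReal ≤ (bandUTV l h a (p (n + 1))).toReal :=
        ENNReal.toReal_mono (ne_top_of_le_ne_top hfin (genVar_mono_right hn'.2))
          (genVar_mono_right (hp.1 n n.lt_succ_self).le)
      have hrise := (le_max_left _ _).trans
        (max_sub_le_toReal_bandUTV_sub (hlh _ hn'.1) hn'.1 hn'.2 hfin)
      linarith

theorem bandUTV_neg_le_ofReal (hlh : ∀ s, a ≤ s → l s ≤ h s) (hfin : bandUTV l h a t ≠ ⊤) :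
    bandUTV (-h) (-l) a t ≤ ENNReal.ofReal (h a + (bandUTV l h a t).toReal - l t) := by
  refine genVar_le_iff.2 fun n p hp => ENNReal.ofReal_le_ofReal ?_
  simp only [Pi.neg_apply, neg_sub_neg]
  exact le_sub_iff_add_le.2 (hp.sum_max_add_le hlh hfin)

theorem bandUTV_neg_ne_top (hlh : ∀ s, a ≤ s → l s ≤ h s) (hfin : bandUTV l h a t ≠ ⊤) :
    bandUTV (-h) (-l) a t ≠ ⊤ :=
  ne_top_of_le_ne_top ENNReal.ofReal_ne_top (bandUTV_neg_le_ofReal hlh hfin)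

theorem bandPlay_neg (c : ℝ) (l h : ℝ → ℝ) (a : ℝ) :
    bandPlay (-c) (-h) (-l) a = -bandPlay c l h a := by
  funext t
  simp only [bandPlay, Pi.neg_apply, neg_neg]
  ring

theorem bandPlay_self (c : ℝ) (l h : ℝ → ℝ) (a : ℝ) : bandPlay c l h a a = c := by
  simp [bandPlay, bandUTV, genVar_self]

theorem le_bandPlay (hc : h a ≤ c) (hlh : ∀ s, a ≤ s → l s ≤ h s)
    (hfin : bandUTV l h a t ≠ ⊤) (hat : a ≤ t) : l t ≤ bandPlay c l h a t := by
  have hnonneg : 0 ≤ h a + (bandUTV l h a t).toReal - l t := by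
    have hp : IsPartition a t 0 fun _ => a := ⟨by simp, le_rfl, hat⟩
    simpa using hp.sum_max_add_le hlh hfin
  have := ENNReal.toReal_le_of_le_ofReal hnonneg (bandUTV_neg_le_ofReal hlh hfin)
  rw [bandPlay]
  linarith

theorem bandPlay_le (hc : c ≤ l a) (hlh : ∀ s, a ≤ s → l s ≤ h s)
    (hfin : bandUTV l h a t ≠ ⊤) (hat : a ≤ t) : bandPlay c l h a t ≤ h t := by
  have := le_bandPlay (l := -h) (h := -l) (neg_le_neg hc) (fun s hs => neg_le_neg (hlh s hs))
    (bandUTV_neg_ne_top hlh hfin) hat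
  rw [bandPlay_neg] at this
  exact neg_le_neg_iff.1 this

theorem UTV_bandPlay_le (hU : bandUTV l h a b ≠ ⊤) (hD : bandUTV (-h) (-l) a b ≠ ⊤) :
    UTV (bandPlay c l h a) a b ≤ bandUTV l h a b := by
  have hle : UTV (bandPlay c l h a) a b ≤
      ENNReal.ofReal ((bandUTV l h a b).toReal - (bandUTV l h a a).toReal) :=
    genVar_le_ofReal_sub (F := fun t => (bandUTV l h a t).toReal)
      (fun _ _ => le_max_right _ _) fun s t _ hst htb => by
        have hUst := ENNReal.toReal_mono (ne_top_of_le_ne_top hU (genVar_mono_right htb))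
          (genVar_mono_right hst.le)
        have hDst := ENNReal.toReal_mono (ne_top_of_le_ne_top hD (genVar_mono_right htb))
          (genVar_mono_right hst.le)
        simp only [bandPlay, bandUTV] at hUst hDst ⊢
        exact max_le (by linarith) (by linarith)
  exact hle.trans (ENNReal.ofReal_le_of_le_toReal (sub_le_self _ ENNReal.toReal_nonneg))

theorem DTV_bandPlay_le (hU : bandUTV l h a b ≠ ⊤) (hD : bandUTV (-h) (-l) a b ≠ ⊤) :
    DTV (bandPlay c l h a) a b ≤ bandUTV (-h) (-l) a b := by
  rw [DTV_eq_UTV_neg, ← bandPlay_neg]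
  exact UTV_bandPlay_le hD (by rwa [neg_neg, neg_neg])

theorem bandPlay_mem_band (hl : c ≤ l a) (hh : h a ≤ c) (hlh : ∀ s, a ≤ s → l s ≤ h s)
    (hfin : bandUTV l h a b ≠ ⊤) :
    ∀ t ∈ Icc a b, l t ≤ bandPlay c l h a t ∧ bandPlay c l h a t ≤ h t := fun _ ht =>
  have hfin' := ne_top_of_le_ne_top hfin (genVar_mono_right ht.2)
  ⟨le_bandPlay hh hlh hfin' ht.1, bandPlay_le hl hlh hfin' ht.1⟩

theorem UTV_bandPlay (hl : c ≤ l a) (hh : h a ≤ c) (hlh : ∀ s, a ≤ s → l s ≤ h s)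
    (hfin : bandUTV l h a b ≠ ⊤) : UTV (bandPlay c l h a) a b = bandUTV l h a b :=
  (UTV_bandPlay_le hfin (bandUTV_neg_ne_top hlh hfin)).antisymm
    (bandUTV_le_UTV (bandPlay_mem_band hl hh hlh hfin))

theorem DTV_bandPlay (hl : c ≤ l a) (hh : h a ≤ c) (hlh : ∀ s, a ≤ s → l s ≤ h s)
    (hfin : bandUTV l h a b ≠ ⊤) : DTV (bandPlay c l h a) a b = bandUTV (-h) (-l) a b :=
  (DTV_bandPlay_le hfin (bandUTV_neg_ne_top hlh hfin)).antisymm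
    (bandUTV_neg_le_DTV (bandPlay_mem_band hl hh hlh hfin))

theorem TV_bandPlay_le_TV (hlh : ∀ s, a ≤ s → l s ≤ h s) (hfin : bandUTV l h a b ≠ ⊤)
    (hab : a ≤ b) (hχ : ∀ t ∈ Icc a b, l t ≤ χ t ∧ χ t ≤ h t) :
    TV (bandPlay c l h a) a b ≤ TV χ a b :=
  have hfin' := bandUTV_neg_ne_top hlh hfin
  calc TV (bandPlay c l h a) a b
      ≤ UTV (bandPlay c l h a) a b + DTV (bandPlay c l h a) a b := TV_le_UTV_add_DTV _ _ _
    _ ≤ bandUTV l h a b + bandUTV (-h) (-l) a b :=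
        add_le_add (UTV_bandPlay_le hfin hfin') (DTV_bandPlay_le hfin hfin')
    _ ≤ UTV χ a b + DTV χ a b := add_le_add (bandUTV_le_UTV hχ) (bandUTV_neg_le_DTV hχ)
    _ ≤ TV χ a b := UTV_add_DTV_le_TV hab

end Band

section Boundaries

theorem UTVab_eq_bandUTV (ψ α β : ℝ → ℝ) : UTVab ψ α β = bandUTV (ψ - β) (ψ - α) := by
  unfold UTVab bandUTV
  congr! 4
  simp only [Pi.sub_apply]
  ring

theorem DTVab_eq_bandUTV (ψ α β : ℝ → ℝ) : DTVab ψ α β = bandUTV (-(ψ - α)) (-(ψ - β)) := by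
  unfold DTVab bandUTV
  congr! 4
  simp only [Pi.neg_apply, Pi.sub_apply]
  ring

theorem UTVab_le_TVab (ψ α β : ℝ → ℝ) (a b : ℝ) : UTVab ψ α β a b ≤ TVab ψ α β a b :=
  genVar_mono fun _ _ _ _ => max_le_max (sub_le_sub_right (le_abs_self _) _) le_rfl

variable {u α β u₀ α₀ β₀ : ℝ → ℝ} {a : ℝ}

theorem TVab_le_TVab_add_ofReal (hu : ∀ t, a < t → u₀ t = u t) (hα : ∀ t, a < t → α₀ t = α t)
    (hβ : ∀ t, a < t → β₀ t = β t) (hl : u a - β a ≤ u₀ a - β₀ a) (hlh : α₀ a ≤ β₀ a)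
    (hh : u₀ a - α₀ a ≤ u a - α a) (t : ℝ) :
    TVab u₀ α₀ β₀ a t ≤ TVab u α β a t + ENNReal.ofReal (β a - α a) := by
  refine genVar_le_genVar_add_ofReal (by linarith) (fun t ht => ?_) fun s t hs hst => ?_
  · rw [hu t ht, hα t ht, hβ t ht, ← max_add_add_right]
    have hincr := abs_le.1 (le_refl |u t - (α t + β t) / 2 - (u a - (α a + β a) / 2)|)
    refine max_le_max ?_ (by linarith)
    rw [sub_le_iff_le_add]
    exact abs_le.2 ⟨by linarith, by linarith⟩
  · rw [hu t (hs.trans hst), hα t (hs.trans hst), hβ t (hs.trans hst), hu s hs, hα s hs, hβ s hs]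

theorem pinched_band_le (hα₀ : α₀ a = 0 ∧ ∀ t, a < t → α₀ t = α t)
    (hβ₀ : β₀ a = 0 ∧ ∀ t, a < t → β₀ t = β t) (hαβ : ∀ t, a ≤ t → α t ≤ β t) {t : ℝ}
    (ht : a ≤ t) : (u₀ - β₀) t ≤ (u₀ - α₀) t := by
  refine sub_le_sub_left ?_ (u₀ t)
  rcases ht.eq_or_lt with rfl | hlt
  · exact (hα₀.1.trans hβ₀.1.symm).le
  · simpa only [hα₀.2 t hlt, hβ₀.2 t hlt] using hαβ t ht

theorem pinched_band_iff {ξ₀ t : ℝ} {χ : ℝ → ℝ} (hu₀ : u₀ a = ξ₀ ∧ ∀ t, a < t → u₀ t = u t)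
    (hα₀ : α₀ a = 0 ∧ ∀ t, a < t → α₀ t = α t) (hβ₀ : β₀ a = 0 ∧ ∀ t, a < t → β₀ t = β t)
    (hξ₀ : u a - β a ≤ ξ₀ ∧ ξ₀ ≤ u a - α a) (hχ : χ a = ξ₀) (ht : a ≤ t) :
    ((u₀ - β₀) t ≤ χ t ∧ χ t ≤ (u₀ - α₀) t) ↔ α t ≤ u t - χ t ∧ u t - χ t ≤ β t := by
  simp only [Pi.sub_apply]
  rcases ht.eq_or_lt with rfl | hlt
  · rw [hu₀.1, hα₀.1, hβ₀.1, hχ, sub_zero]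
    exact iff_of_true ⟨le_rfl, le_rfl⟩ ⟨by linarith, by linarith⟩
  · rw [hu₀.2 t hlt, hα₀.2 t hlt, hβ₀.2 t hlt]
    exact and_comm.trans (and_congr le_sub_comm sub_le_comm)

end Boundaries

theorem stmt11_general (a : ℝ) (u α β : ℝ → ℝ)
    (hαβ : ∀ t, a ≤ t → α t ≤ β t)
    (hfin : ∀ t, a ≤ t → TVab u α β a t < ⊤)
    (ξ₀ : ℝ) (hξ₀ : u a - β a ≤ ξ₀ ∧ ξ₀ ≤ u a - α a)
    (α₀ β₀ u₀ : ℝ → ℝ)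
    (hα₀ : α₀ a = 0 ∧ ∀ t, a < t → α₀ t = α t)
    (hβ₀ : β₀ a = 0 ∧ ∀ t, a < t → β₀ t = β t)
    (hu₀ : u₀ a = ξ₀ ∧ ∀ t, a < t → u₀ t = u t)
    (ξ : ℝ → ℝ)
    (hξ : ∀ t, ξ t =
      ξ₀ + (UTVab u₀ α₀ β₀ a t).toReal - (DTVab u₀ α₀ β₀ a t).toReal) :
    (∀ t, a ≤ t → TVab u₀ α₀ β₀ a t < ⊤) ∧
    ξ a = ξ₀ ∧
    (∀ t, a ≤ t → α t ≤ u t - ξ t ∧ u t - ξ t ≤ β t) ∧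
    (∀ t, a < t →
      UTV ξ a t = UTVab u₀ α₀ β₀ a t ∧
      DTV ξ a t = DTVab u₀ α₀ β₀ a t) ∧
    (∀ χ : ℝ → ℝ, χ a = ξ₀ →
      (∀ t, a ≤ t → α t ≤ u t - χ t ∧ u t - χ t ≤ β t) →
      ∀ t, a < t → TV ξ a t ≤ TV χ a t) := by
  simp only [UTVab_eq_bandUTV, DTVab_eq_bandUTV] at hξ ⊢
  obtain rfl : ξ = bandPlay ξ₀ (u₀ - β₀) (u₀ - α₀) a := funext hξ
  have hl : (u₀ - β₀) a = ξ₀ := by simp [hu₀.1, hβ₀.1]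
  have hh : (u₀ - α₀) a = ξ₀ := by simp [hu₀.1, hα₀.1]
  have hlh : ∀ t, a ≤ t → (u₀ - β₀) t ≤ (u₀ - α₀) t := fun _ => pinched_band_le hα₀ hβ₀ hαβ
  have hband {χ : ℝ → ℝ} (hχ : χ a = ξ₀) {t : ℝ} (ht : a ≤ t) :=
    pinched_band_iff hu₀ hα₀ hβ₀ hξ₀ hχ ht
  have hTV : ∀ t, a ≤ t → TVab u₀ α₀ β₀ a t < ⊤ := fun t ht =>
    (TVab_le_TVab_add_ofReal hu₀.2 hα₀.2 hβ₀.2 (hξ₀.1.trans_eq hl.symm)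
      (hα₀.1.trans hβ₀.1.symm).le (hh.trans_le hξ₀.2) t).trans_lt
        (ENNReal.add_lt_top.2 ⟨hfin t ht, ENNReal.ofReal_lt_top⟩)
  have hU : ∀ t, a ≤ t → bandUTV (u₀ - β₀) (u₀ - α₀) a t ≠ ⊤ := fun t ht =>
    ne_top_of_le_ne_top (hTV t ht).ne (UTVab_eq_bandUTV u₀ α₀ β₀ ▸ UTVab_le_TVab u₀ α₀ β₀ a t)
  have hstart := bandPlay_self ξ₀ (u₀ - β₀) (u₀ - α₀) a
  refine ⟨hTV, hstart, fun t ht => (hband hstart ht).1 ?_, fun t ht => ⟨?_, ?_⟩,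
    fun χ hχ₀ hχ t ht => ?_⟩
  · exact bandPlay_mem_band hl.ge hh.le hlh (hU t ht) t (right_mem_Icc.2 ht)
  · exact UTV_bandPlay hl.ge hh.le hlh (hU t ht.le)
  · exact DTV_bandPlay hl.ge hh.le hlh (hU t ht.le)
  · exact TV_bandPlay_le_TV hlh (hU t ht.le) ht.le fun s hs => (hband hχ₀ hs.1).2 (hχ s hs.1)

/-- the play operator with boundaries `α ≤ β` and starting
point `ξ⁰` is given by the Jordan-like formula
`ξ = ξ⁰ + UTV^{α⁰,β⁰}(u^{ξ⁰},[0,·]) - DTV^{α⁰,β⁰}(u^{ξ⁰},[0,·])`,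
where `α⁰, β⁰, u^{ξ⁰}` are the modifications at `0`; the output stays in
the band, realises its positive/negative variations via the truncated
ones, and has minimal total variation among all admissible functions. -/
theorem stmt11 (u α β : ℝ → ℝ)
    (hu : Regulated 0 u) (hα : Regulated 0 α) (hβ : Regulated 0 β)
    (hαβ : ∀ t, 0 ≤ t → α t ≤ β t)
    (hfin : ∀ t, 0 ≤ t → TVab u α β 0 t < ⊤)
    (ξ₀ : ℝ) (hξ₀ : u 0 - β 0 ≤ ξ₀ ∧ ξ₀ ≤ u 0 - α 0)
    (α₀ β₀ u₀ : ℝ → ℝ)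
    (hα₀ : α₀ 0 = 0 ∧ ∀ t, 0 < t → α₀ t = α t)
    (hβ₀ : β₀ 0 = 0 ∧ ∀ t, 0 < t → β₀ t = β t)
    (hu₀ : u₀ 0 = ξ₀ ∧ ∀ t, 0 < t → u₀ t = u t)
    (ξ : ℝ → ℝ)
    (hξ : ∀ t, ξ t =
      ξ₀ + (UTVab u₀ α₀ β₀ 0 t).toReal - (DTVab u₀ α₀ β₀ 0 t).toReal) :
    (∀ t, 0 ≤ t → TVab u₀ α₀ β₀ 0 t < ⊤) ∧
    ξ 0 = ξ₀ ∧
    (∀ t, 0 ≤ t → α t ≤ u t - ξ t ∧ u t - ξ t ≤ β t) ∧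
    (∀ t, 0 < t →
      UTV ξ 0 t = UTVab u₀ α₀ β₀ 0 t ∧
      DTV ξ 0 t = DTVab u₀ α₀ β₀ 0 t) ∧
    (∀ χ : ℝ → ℝ, χ 0 = ξ₀ →
      (∀ t, 0 ≤ t → α t ≤ u t - χ t ∧ u t - χ t ≤ β t) →
      ∀ t, 0 < t → TV ξ 0 t ≤ TV χ 0 t) := by
  exact stmt11_general 0 u α β hαβ hfin ξ₀ hξ₀ α₀ β₀ u₀ hα₀ hβ₀ hu₀ ξ hξ
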